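/- Let ω₁, ω₂ ∈ ℂ be linearly independent over ℝ and let Λ = ℤω₁ + ℤω₂ ⊆ ℂ. Then the lattice invariants g₂(Λ) = 60·Σ_{ω∈Λ, ω≠0} ω⁻⁴ and g₃(Λ) = 140·Σ_{ω∈Λ, ω≠0} ω⁻⁶ (these series converge absolutely) are both real numbers if and only if Λ is invariant under complex conjugation, i.e. {conj(ω) : ω ∈ Λ} = Λ. -/

import Mathlib

/-!
A lattice `Λ` is determined by `g₂(Λ)` and `g₃(Λ)`. Indeed, suppose that `℘` and `℘*` belong to two
lattices with the same invariants. Subtracting their differential equations gives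
`(℘' - ℘*') (℘' + ℘*') = (℘ - ℘*) (4 (℘² + ℘ ℘* + ℘*²) - g₂)`, a linear equation for the
difference `℘ - ℘*` with a regular singular point at `0`. Since `℘` and `℘*` are asymptotic to
`z⁻²`, its only exponent there is `-3`; but `℘ - ℘*` is holomorphic at `0`, so it vanishes
identically, and `Λ` is recovered as the set of poles of `℘`.

Conjugating `Λ` conjugates `g₂` and `g₃`, so these are real iff `Λ` and its conjugate have the same
invariants, i.e. iff they are equal.
-/

open Filter Topology
open scoped ComplexConjugate PeriodPair

section RegularSingular

variable {𝕜 : Type*} [NontriviallyNormedField 𝕜] [CompleteSpace 𝕜] {f : 𝕜 → 𝕜} {x : 𝕜} {n : ℤ}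

lemma tendsto_sub_mul_logDeriv (hf : MeromorphicAt f x) (hn : meromorphicOrderAt f x = n) :
    Tendsto (fun z ↦ (z - x) * logDeriv f z) (𝓝[≠] x) (𝓝 n) := by
  obtain ⟨g, hg, hgx, hfg⟩ := (meromorphicOrderAt_eq_int_iff hf).1 hn
  have hlog : ∀ᶠ z in 𝓝[≠] x, n + (z - x) * logDeriv g z = (z - x) * logDeriv f z := by
    filter_upwards [logDeriv_congr_nhdsNE hfg, self_mem_nhdsWithin,
      nhdsWithin_le_nhds hg.eventually_analyticAt,
      nhdsWithin_le_nhds (hg.continuousAt.eventually_ne hgx)] with z hz hzx hgz hgz0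
    have hzx' : z - x ≠ 0 := sub_ne_zero.2 hzx
    have hpow : logDeriv (fun w ↦ (w - x) ^ n) z = n / (z - x) := by
      rw [logDeriv_fun_zpow (by fun_prop)]
      simp [logDeriv_apply, div_eq_mul_inv]
    simp only [smul_eq_mul] at hz
    have hdpow : DifferentiableAt 𝕜 (fun w ↦ (w - x) ^ n) z :=
      (by fun_prop : DifferentiableAt 𝕜 (fun w ↦ w - x) z).zpow (.inl hzx')
    rw [hz, logDeriv_mul (f := fun w ↦ (w - x) ^ n) z (zpow_ne_zero n hzx') hgz0 hdpow
      hgz.differentiableAt, hpow]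
    field
  have hcont : ContinuousAt (fun z ↦ n + (z - x) * logDeriv g z) x := by
    have hlogg : ContinuousAt (logDeriv g) x := hg.deriv.continuousAt.div hg.continuousAt hgx
    fun_prop
  have hlim := hcont.tendsto.mono_left (nhdsWithin_le_nhds (s := {x}ᶜ))
  simp only [sub_self, zero_mul, add_zero] at hlim
  exact hlim.congr' hlog

lemma indicial_equation {a b : 𝕜 → 𝕜} {α β : 𝕜} (hf : MeromorphicAt f x)
    (hn : meromorphicOrderAt f x = n) (ha : Tendsto a (𝓝[≠] x) (𝓝 α))
    (hb : Tendsto b (𝓝[≠] x) (𝓝 β))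
    (hode : ∀ᶠ z in 𝓝[≠] x, (z - x) * deriv f z * a z = f z * b z) :
    n * α = β := by
  have hf0 : ∀ᶠ z in 𝓝[≠] x, f z ≠ 0 :=
    (meromorphicOrderAt_ne_top_iff_eventually_ne_zero hf).1 (hn ▸ WithTop.coe_ne_top)
  refine tendsto_nhds_unique (((tendsto_sub_mul_logDeriv hf hn).mul ha).congr' ?_) hb
  filter_upwards [hode, hf0] with z hz hfz
  rw [logDeriv_apply, ← mul_div_assoc, div_mul_eq_mul_div, hz, mul_div_cancel_left₀ _ hfz]

end RegularSingular

section Weierstrass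

variable {P Q : PeriodPair}

lemma eventually_notMem_lattice (P : PeriodPair) (x : ℂ) : ∀ᶠ z in 𝓝[≠] x, z ∉ P.lattice := by
  filter_upwards [nhdsWithin_le_nhds (P.compl_lattice_sdiff_singleton_mem_nhds x),
    self_mem_nhdsWithin] with z hz hzx hzP
  exact hz ⟨hzP, hzx⟩

lemma tendsto_sub_sq_mul_weierstrassP {l : ℂ} (hl : l ∈ P.lattice) :
    Tendsto (fun z ↦ (z - l) ^ 2 * ℘[P] z) (𝓝[≠] l) (𝓝 1) := by
  have hcont : ContinuousAt (fun z ↦ (z - l) ^ 2 * ℘[P - l] z + 1 - (z - l) ^ 2 / l ^ 2) l := by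
    have := (P.analyticAt_weierstrassPExcept l).continuousAt
    fun_prop
  have hlim := hcont.tendsto.mono_left (nhdsWithin_le_nhds (s := {l}ᶜ))
  simp only [sub_self, ne_eq, OfNat.ofNat_ne_zero, not_false_eq_true, zero_pow, zero_mul, zero_add,
    zero_div, sub_zero] at hlim
  refine hlim.congr' ?_
  filter_upwards [self_mem_nhdsWithin] with z hz
  exact (P.ite_eq_one_sub_sq_mul_weierstrassP l hl z).symm.trans (if_neg hz)

lemma tendsto_sub_pow_three_mul_derivWeierstrassP {l : ℂ} (hl : l ∈ P.lattice) :
    Tendsto (fun z ↦ (z - l) ^ 3 * ℘'[P] z) (𝓝[≠] l) (𝓝 (-2)) := by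
  have hcont : ContinuousAt (fun z ↦ (z - l) ^ 3 * ℘'[P - l] z - 2) l := by
    have := (P.analyticAt_derivWeierstrassPExcept l).continuousAt
    fun_prop
  have hlim := hcont.tendsto.mono_left (nhdsWithin_le_nhds (s := {l}ᶜ))
  simp only [sub_self, ne_eq, OfNat.ofNat_ne_zero, not_false_eq_true, zero_pow, zero_mul,
    zero_sub] at hlim
  refine hlim.congr' ?_
  filter_upwards [self_mem_nhdsWithin] with z hz
  have hzl : z - l ≠ 0 := sub_ne_zero.2 hz
  rw [P.derivWeierstrassPExcept_def ⟨l, hl⟩]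
  field

lemma analyticAt_weierstrassP_sub_weierstrassP {l : ℂ} (hP : l ∈ P.lattice) (hQ : l ∈ Q.lattice) :
    AnalyticAt ℂ (℘[P] - ℘[Q]) l := by
  have heq : ℘[P] - ℘[Q] = ℘[P - l] - ℘[Q - l] := by
    ext z
    simp only [Pi.sub_apply, P.weierstrassPExcept_def ⟨l, hP⟩, Q.weierstrassPExcept_def ⟨l, hQ⟩,
      add_sub_add_right_eq_sub]
  rw [heq]
  exact (P.analyticAt_weierstrassPExcept l).sub (Q.analyticAt_weierstrassPExcept l)

lemma meromorphicOrderAt_weierstrassP_neg_iff {l : ℂ} :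
    meromorphicOrderAt ℘[P] l < 0 ↔ l ∈ P.lattice := by
  refine ⟨fun hneg ↦ ?_, fun hl ↦ ?_⟩
  · by_contra hl
    exact hneg.not_ge (P.analyticOnNhd_weierstrassP l hl).meromorphicOrderAt_nonneg
  · rw [P.order_weierstrassP l hl]
    decide

lemma lattice_eq_of_weierstrassP_eventuallyEq {x : ℂ} (h : ℘[P] =ᶠ[𝓝[≠] x] ℘[Q]) :
    P.lattice = Q.lattice := by
  have hmero : MeromorphicOn (℘[P] - ℘[Q]) Set.univ := fun z _ ↦
    (P.meromorphic_weierstrassP z).sub (Q.meromorphic_weierstrassP z)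
  have hx : meromorphicOrderAt (℘[P] - ℘[Q]) x = ⊤ :=
    meromorphicOrderAt_eq_top_iff.2 (h.mono fun z hz ↦ sub_eq_zero.2 hz)
  have hnear (l : ℂ) : ℘[P] =ᶠ[𝓝[≠] l] ℘[Q] := by
    have hl : meromorphicOrderAt (℘[P] - ℘[Q]) l = ⊤ := by
      by_contra hl
      exact hmero.meromorphicOrderAt_ne_top_of_isPreconnected isPreconnected_univ
        (Set.mem_univ l) (Set.mem_univ x) hl hx
    exact (meromorphicOrderAt_eq_top_iff.1 hl).mono fun z hz ↦ sub_eq_zero.1 hz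
  ext l
  rw [← meromorphicOrderAt_weierstrassP_neg_iff, meromorphicOrderAt_congr (hnear l),
    meromorphicOrderAt_weierstrassP_neg_iff]

lemma deriv_weierstrassP_sub_weierstrassP_mul_eq (h₂ : P.g₂ = Q.g₂) (h₃ : P.g₃ = Q.g₃) {z : ℂ}
    (hP : z ∉ P.lattice) (hQ : z ∉ Q.lattice) :
    deriv (℘[P] - ℘[Q]) z * (℘'[P] z + ℘'[Q] z) =
      (℘[P] - ℘[Q]) z * (4 * (℘[P] z ^ 2 + ℘[P] z * ℘[Q] z + ℘[Q] z ^ 2) - P.g₂) := by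
  rw [deriv_sub (P.analyticOnNhd_weierstrassP z hP).differentiableAt
    (Q.analyticOnNhd_weierstrassP z hQ).differentiableAt, P.deriv_weierstrassP,
    Q.deriv_weierstrassP, Pi.sub_apply]
  have hodeQ := Q.derivWeierstrassP_sq z hQ
  rw [← h₂, ← h₃] at hodeQ
  linear_combination P.derivWeierstrassP_sq z hP - hodeQ

lemma weierstrassP_eventuallyEq_of_g₂_eq_of_g₃_eq (h₂ : P.g₂ = Q.g₂) (h₃ : P.g₃ = Q.g₃) :
    ℘[P] =ᶠ[𝓝[≠] 0] ℘[Q] := by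
  have han : AnalyticAt ℂ (℘[P] - ℘[Q]) 0 :=
    analyticAt_weierstrassP_sub_weierstrassP (zero_mem _) (zero_mem _)
  suffices htop : meromorphicOrderAt (℘[P] - ℘[Q]) 0 = ⊤ from
    (meromorphicOrderAt_eq_top_iff.1 htop).mono fun z hz ↦ sub_eq_zero.1 hz
  by_contra hfin
  obtain ⟨n, hn⟩ := WithTop.ne_top_iff_exists.1 hfin
  have hpP := tendsto_sub_sq_mul_weierstrassP (zero_mem P.lattice)
  have hpQ := tendsto_sub_sq_mul_weierstrassP (zero_mem Q.lattice)
  have ha := (tendsto_sub_pow_three_mul_derivWeierstrassP (zero_mem P.lattice)).add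
    (tendsto_sub_pow_three_mul_derivWeierstrassP (zero_mem Q.lattice))
  have hz4 : Tendsto (fun z : ℂ ↦ P.g₂ * (z - 0) ^ 4) (𝓝[≠] 0) (𝓝 (P.g₂ * (0 - 0) ^ 4)) :=
    (by fun_prop : Continuous fun z : ℂ ↦ P.g₂ * (z - 0) ^ 4).continuousWithinAt
  have hb := ((((hpP.pow 2).add (hpP.mul hpQ)).add (hpQ.pow 2)).const_mul 4).sub hz4
  have hindicial := indicial_equation han.meromorphicAt hn.symm ha hb <| by
    filter_upwards [eventually_notMem_lattice P 0, eventually_notMem_lattice Q 0] with z hP hQ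
    linear_combination z ^ 4 * deriv_weierstrassP_sub_weierstrassP_mul_eq h₂ h₃ hP hQ
  have hn3 : n = -3 := by
    have : (n : ℂ) = (-3 : ℤ) := by push_cast; linear_combination (-1 / 4) * hindicial
    exact_mod_cast this
  have hnonneg : 0 ≤ n := by
    have := han.meromorphicOrderAt_nonneg
    rw [← hn] at this
    exact_mod_cast this
  omega

lemma G_eq_of_lattice_eq (h : P.lattice = Q.lattice) : P.G = Q.G := by
  ext n
  rw [PeriodPair.G, PeriodPair.G, h]

theorem lattice_eq_iff_g₂_eq_and_g₃_eq :
    P.lattice = Q.lattice ↔ P.g₂ = Q.g₂ ∧ P.g₃ = Q.g₃ := by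
  refine ⟨fun h ↦ ?_, fun ⟨h₂, h₃⟩ ↦
    lattice_eq_of_weierstrassP_eventuallyEq (weierstrassP_eventuallyEq_of_g₂_eq_of_g₃_eq h₂ h₃)⟩
  simp only [PeriodPair.g₂, PeriodPair.g₃, G_eq_of_lattice_eq h, and_self]

end Weierstrass

section Conjugation

/-- The pair of complex conjugate periods, spanning the conjugate lattice. -/
noncomputable def conjPeriodPair (P : PeriodPair) : PeriodPair where
  ω₁ := conj P.ω₁
  ω₂ := conj P.ω₂
  indep := by
    have heq : ![conj P.ω₁, conj P.ω₂] = Complex.conjAe.toLinearMap ∘ ![P.ω₁, P.ω₂] := by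
      ext i
      fin_cases i <;> simp
    rw [heq]
    exact P.indep.map' _ (LinearMap.ker_eq_bot.2 Complex.conjAe.injective)

variable (P : PeriodPair)

lemma coe_lattice_conjPeriodPair :
    ((conjPeriodPair P).lattice : Set ℂ) = conj '' (P.lattice : Set ℂ) := by
  ext z
  simp only [SetLike.mem_coe, Set.mem_image, PeriodPair.mem_lattice, conjPeriodPair]
  constructor
  · rintro ⟨m, n, rfl⟩
    exact ⟨_, ⟨m, n, rfl⟩, by simp⟩
  · rintro ⟨_, ⟨m, n, rfl⟩, rfl⟩
    exact ⟨m, n, by simp⟩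

lemma G_conjPeriodPair (n : ℕ) : (conjPeriodPair P).G n = conj (P.G n) := by
  change ∑' l : ((conjPeriodPair P).lattice : Set ℂ), ((l : ℂ) ^ n)⁻¹ = _
  rw [coe_lattice_conjPeriodPair, tsum_image (fun w : ℂ ↦ (w ^ n)⁻¹) (RingHom.injective _).injOn,
    PeriodPair.G, Complex.conj_tsum]
  simp only [map_inv₀, map_pow, SetLike.coe_sort_coe]

theorem g₂_im_eq_zero_and_g₃_im_eq_zero_iff :
    (P.g₂.im = 0 ∧ P.g₃.im = 0) ↔ conj '' (P.lattice : Set ℂ) = P.lattice := by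
  rw [← coe_lattice_conjPeriodPair, SetLike.coe_set_eq, lattice_eq_iff_g₂_eq_and_g₃_eq,
    ← Complex.conj_eq_iff_im, ← Complex.conj_eq_iff_im]
  simp only [PeriodPair.g₂, PeriodPair.g₃, G_conjPeriodPair, map_mul, map_ofNat]

end Conjugation

section PuncturedLattice

variable (P : PeriodPair) {k : ℕ}

lemma summable_norm_lattice_inv_pow (hk : 2 < k) :
    Summable fun w : ↥((P.lattice : Set ℂ) \ {0}) ↦ ‖(w : ℂ)⁻¹ ^ k‖ := by
  have hsum := (P.hasSum_sumInvPow 0 hk).summable.norm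
  have hsub : (P.lattice : Set ℂ) \ {0} ⊆ P.lattice := Set.sdiff_subset
  refine (hsum.comp_injective (Set.inclusion_injective hsub)).congr fun w ↦ ?_
  simp

lemma tsum_lattice_sdiff_zero_inv_pow (hk : k ≠ 0) :
    ∑' w : ↥((P.lattice : Set ℂ) \ {0}), (w : ℂ)⁻¹ ^ k = P.G k := by
  rw [← tsum_eq_tsum_sdiff_singleton (f := fun w : ℂ ↦ w⁻¹ ^ k) _ (by simp [hk])]
  simp only [inv_pow, PeriodPair.G, SetLike.coe_sort_coe]

end PuncturedLattice

/-- For a lattice `Λ = ℤω₁ + ℤω₂` (with `ω₁, ω₂` linearly independent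
over `ℝ`), the series defining `g₂(Λ) = 60·Σ ω⁻⁴` and `g₃(Λ) = 140·Σ ω⁻⁶` over the
nonzero lattice points converge absolutely, and `g₂(Λ)` and `g₃(Λ)` are both real
iff `Λ` is invariant under complex conjugation. -/
theorem stmt6 (ω₁ ω₂ : ℂ) (hindep : LinearIndependent ℝ ![ω₁, ω₂])
    (L : Set ℂ) (hL : L = {w : ℂ | ∃ m n : ℤ, w = (m : ℂ) * ω₁ + (n : ℂ) * ω₂}) :
    (Summable (fun w : ↥(L \ {0}) => ‖((w : ℂ))⁻¹ ^ 4‖) ∧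
     Summable (fun w : ↥(L \ {0}) => ‖((w : ℂ))⁻¹ ^ 6‖)) ∧
    ((((60 : ℂ) * ∑' w : ↥(L \ {0}), ((w : ℂ))⁻¹ ^ 4).im = 0 ∧
      ((140 : ℂ) * ∑' w : ↥(L \ {0}), ((w : ℂ))⁻¹ ^ 6).im = 0) ↔
      (starRingEnd ℂ) '' L = L) := by
  let P : PeriodPair := ⟨ω₁, ω₂, hindep⟩
  have hLP : L = P.lattice := by
    ext z
    simp only [hL, Set.mem_ofPred_eq, SetLike.mem_coe, PeriodPair.mem_lattice, P, eq_comm]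
  subst hLP
  refine ⟨⟨summable_norm_lattice_inv_pow P (by norm_num),
    summable_norm_lattice_inv_pow P (by norm_num)⟩, ?_⟩
  rw [tsum_lattice_sdiff_zero_inv_pow P (by norm_num),
    tsum_lattice_sdiff_zero_inv_pow P (by norm_num)]
  exact g₂_im_eq_zero_and_g₃_im_eq_zero_iff P
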